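/- The G-invariant 1-forms, i.e., the elements f₁y₁ + f₂y₂ + f₃y₃ of R (fₛ ∈ S) fixed by every g ∈ G, form a free A-module with basis {c₁, c₂, c₃, c₄, c₅, c₆}: every such G-invariant 1-form is uniquely an A-linear combination of c₁,…,c₆. -/

import Mathlib

open Matrix MvPolynomial

set_option synthInstance.maxHeartbeats 1000000
set_option maxHeartbeats 1000000

abbrev F3 : Type := ZMod 3
abbrev G3 : Type := Matrix.SpecialLinearGroup (Fin 2) F3
abbrev S3 : Type := MvPolynomial (Fin 3) F3

/-- The fixed basis `v₁, v₂, v₃` of the traceless `2 × 2` matrices over `𝔽₃`. -/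
def V : Fin 3 → Matrix (Fin 2) (Fin 2) F3 :=
  ![!![0, 1; -1, 0], !![-1, -1; -1, 1], !![1, -1; -1, -1]]

/-- Coordinates of a traceless matrix with respect to the basis `v₁, v₂, v₃`. -/
def coordM : Fin 3 → Matrix (Fin 2) (Fin 2) F3 → F3 :=
  ![fun X => X 1 0 - X 0 1, fun X => X 0 0 - X 0 1 - X 1 0, fun X => -(X 0 0 + X 0 1 + X 1 0)]

/-- Matrix of the (dual) action of `g` on `M*`: `g • x_s = ∑ r, (rep g) s r • x_r`, where
`(rep g) s r = x_s (g⁻¹ • v_r) = coordM s (g⁻¹ vᵣ g)`, coming from `(g • f)(v) = f(g⁻¹ • v)`. -/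
def rep (g : G3) : Matrix (Fin 3) (Fin 3) F3 :=
  Matrix.of fun s r => coordM s ((g⁻¹ : G3) * V r * (g : Matrix (Fin 2) (Fin 2) F3))

/-- The action of `g ∈ SL₂(𝔽₃)` on `S = 𝔽₃[x₁,x₂,x₃]` by algebra automorphisms, given by
substituting `x_s ↦ g • x_s = ∑ r, (rep g) s r • x_r`. -/
noncomputable def actS (g : G3) : S3 →ₐ[F3] S3 :=
  MvPolynomial.aeval fun s => ∑ r : Fin 3, rep g s r • MvPolynomial.X r

noncomputable def a1 : S3 := X 0 ^ 2 + X 1 ^ 2 + X 2 ^ 2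
noncomputable def a2 : S3 := X 0 * X 1 * X 2
noncomputable def a3 : S3 := X 0 ^ 4 + X 1 ^ 4 + X 2 ^ 4
noncomputable def bP : S3 := X 0 ^ 4 * X 1 ^ 2 + X 0 ^ 2 * X 2 ^ 4 + X 1 ^ 4 * X 2 ^ 2
noncomputable def av : Fin 3 → S3 := ![a1, a2, a3]

def tm : G3 := ⟨!![1, 1; 0, 1], by decide⟩
def im : G3 := ⟨!![0, 1; -1, 0], by decide⟩
def jm : G3 := ⟨!![1, -1; -1, -1], by decide⟩

/-- The quaternion subgroup `H = ⟨i, j⟩ ≅ Q₈` of `SL₂(𝔽₃)`. -/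
def H3 : Subgroup G3 := Subgroup.closure {im, jm}

/-- The character with `χ(±e) = χ(±i) = 1` and `χ(±j) = χ(±k) = -1` (its values off the
set `{±e, ±i}` are `-1`; only the restriction to `H` is ever used). -/
def chi (g : G3) : F3 :=
  if (g : Matrix (Fin 2) (Fin 2) F3) = 1 ∨ (g : Matrix (Fin 2) (Fin 2) F3) = -1 ∨
     (g : Matrix (Fin 2) (Fin 2) F3) = (im : Matrix (Fin 2) (Fin 2) F3) ∨
     (g : Matrix (Fin 2) (Fin 2) F3) = -(im : Matrix (Fin 2) (Fin 2) F3) then 1 else -1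

/-- The `𝔽₃`-submodule `S^H_χ` of `χ`-relative `H`-invariants in `S`. -/
noncomputable def relInv : Submodule F3 S3 where
  carrier := {f | ∀ h ∈ H3, actS h f = chi h • f}
  add_mem' := by
    intro f g hf hg h hh
    rw [map_add, hf h hh, hg h hh, smul_add]
  zero_mem' := by
    intro h hh
    rw [map_zero, smul_zero]
  smul_mem' := by
    intro c f hf h hh
    rw [_root_.map_smul, hf h hh, smul_comm]

open TensorProduct

/-- The exterior algebra `Λ(M*)` on `y₁, y₂, y₃` (with `M*` in dual-basis coordinates). -/
abbrev Lam : Type := ExteriorAlgebra F3 (Fin 3 → F3)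

/-- `y_s = dx_s`, the exterior generators. -/
noncomputable def yy (s : Fin 3) : Lam := ExteriorAlgebra.ι F3 (Pi.single s 1)

/-- The linear action of `g` on the coordinate space of `y₁, y₂, y₃`:
`y_s ↦ ∑ r, (rep g) s r • y_r`. -/
noncomputable def repL (g : G3) : (Fin 3 → F3) →ₗ[F3] (Fin 3 → F3) :=
  Matrix.toLin' (rep g)ᵀ

/-- The algebra of differential forms `R = S ⊗ Λ(M*)`: the graded-commutative `𝔽₃`-algebra
generated by the central `x₁, x₂, x₃` and the anticommuting `y₁, y₂, y₃`. -/
abbrev Rf : Type := S3 ⊗[F3] Lam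

/-- The action of `g ∈ SL₂(𝔽₃)` on `R` by ring automorphisms, acting on `x`'s as on `S`
and on `y₁, y₂, y₃` by the same matrices as on `x₁, x₂, x₃`. -/
noncomputable def actR (g : G3) : Rf →ₐ[F3] Rf :=
  Algebra.TensorProduct.map (actS g) (ExteriorAlgebra.map (repL g))

noncomputable def c1 : Rf := X 0 ⊗ₜ[F3] yy 0 + X 1 ⊗ₜ[F3] yy 1 + X 2 ⊗ₜ[F3] yy 2
noncomputable def c2 : Rf :=
  (X 1 * X 2) ⊗ₜ[F3] yy 0 + (X 2 * X 0) ⊗ₜ[F3] yy 1 + (X 0 * X 1) ⊗ₜ[F3] yy 2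
noncomputable def c3 : Rf :=
  (X 0 ^ 3) ⊗ₜ[F3] yy 0 + (X 1 ^ 3) ⊗ₜ[F3] yy 1 + (X 2 ^ 3) ⊗ₜ[F3] yy 2
noncomputable def c4 : Rf :=
  (X 0 * X 1 ^ 2) ⊗ₜ[F3] yy 0 + (X 1 * X 2 ^ 2) ⊗ₜ[F3] yy 1 + (X 2 * X 0 ^ 2) ⊗ₜ[F3] yy 2
noncomputable def c5 : Rf :=
  (X 1 ^ 3 * X 2) ⊗ₜ[F3] yy 0 + (X 2 ^ 3 * X 0) ⊗ₜ[F3] yy 1 + (X 0 ^ 3 * X 1) ⊗ₜ[F3] yy 2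
noncomputable def c6 : Rf :=
  (X 0 ^ 3 * X 1 ^ 2) ⊗ₜ[F3] yy 0 + (X 1 ^ 3 * X 2 ^ 2) ⊗ₜ[F3] yy 1 +
    (X 2 ^ 3 * X 0 ^ 2) ⊗ₜ[F3] yy 2

noncomputable def d1 : Rf :=
  X 0 ⊗ₜ[F3] (yy 1 * yy 2) + X 1 ⊗ₜ[F3] (yy 2 * yy 0) + X 2 ⊗ₜ[F3] (yy 0 * yy 1)
noncomputable def d2 : Rf :=
  (X 1 * X 2) ⊗ₜ[F3] (yy 1 * yy 2) + (X 2 * X 0) ⊗ₜ[F3] (yy 2 * yy 0) +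
    (X 0 * X 1) ⊗ₜ[F3] (yy 0 * yy 1)
noncomputable def d3 : Rf :=
  (X 0 ^ 3) ⊗ₜ[F3] (yy 1 * yy 2) + (X 1 ^ 3) ⊗ₜ[F3] (yy 2 * yy 0) +
    (X 2 ^ 3) ⊗ₜ[F3] (yy 0 * yy 1)
noncomputable def d4 : Rf :=
  (X 0 * X 1 ^ 2) ⊗ₜ[F3] (yy 1 * yy 2) + (X 1 * X 2 ^ 2) ⊗ₜ[F3] (yy 2 * yy 0) +
    (X 2 * X 0 ^ 2) ⊗ₜ[F3] (yy 0 * yy 1)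
noncomputable def d5 : Rf :=
  (X 1 ^ 3 * X 2) ⊗ₜ[F3] (yy 1 * yy 2) + (X 2 ^ 3 * X 0) ⊗ₜ[F3] (yy 2 * yy 0) +
    (X 0 ^ 3 * X 1) ⊗ₜ[F3] (yy 0 * yy 1)
noncomputable def d6 : Rf :=
  (X 0 ^ 3 * X 1 ^ 2) ⊗ₜ[F3] (yy 1 * yy 2) + (X 1 ^ 3 * X 2 ^ 2) ⊗ₜ[F3] (yy 2 * yy 0) +
    (X 2 ^ 3 * X 0 ^ 2) ⊗ₜ[F3] (yy 0 * yy 1)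

/-- The top form `y₁y₂y₃`. -/
noncomputable def y123 : Lam := yy 0 * yy 1 * yy 2

noncomputable def cvec : Fin 6 → Rf := ![c1, c2, c3, c4, c5, c6]

/-- The set of `1`-forms `f₁y₁ + f₂y₂ + f₃y₃` with `fₛ ∈ S`. -/
def oneForms : Set Rf :=
  {z | ∃ f₁ f₂ f₃ : S3, z = f₁ ⊗ₜ[F3] yy 0 + f₂ ⊗ₜ[F3] yy 1 + f₃ ⊗ₜ[F3] yy 2}

/-- `Φ(p₁,…,p₆) = ∑ᵢ pᵢ(a₁,a₂,a₃)·cᵢ`. -/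
noncomputable def Phi10 (p : Fin 6 → MvPolynomial (Fin 3) F3) : Rf :=
  ∑ i : Fin 6, (aeval av (p i) ⊗ₜ[F3] (1 : Lam)) * cvec i

/-- Every element of `SL₂(𝔽₃)` acts on `M*` by an even sign change and a cyclic shift. -/
theorem exists_rep_eq_signed_shift (g : G3) : ∃ (σ : Fin 3) (e : Fin 3 → F3), (∀ s, e s ^ 2 = 1) ∧
    e 0 * e 1 * e 2 = 1 ∧ ∀ s r, rep g s r = if r = s + σ then e s else 0 := by
  have key : ∀ (a b c d : F3) (h : (!![a, b; c, d] : Matrix (Fin 2) (Fin 2) F3).det = 1),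
      ∃ (σ : Fin 3) (e : Fin 3 → F3), (∀ s, e s ^ 2 = 1) ∧ e 0 * e 1 * e 2 = 1 ∧
        rep ⟨!![a, b; c, d], h⟩ = Matrix.of fun s r => if r = s + σ then e s else 0 := by
    decide +kernel
  induction g using Matrix.SpecialLinearGroup.fin_two_induction with
  | h a b c d h =>
    obtain ⟨σ, e, he, he', h⟩ := key a b c d (by rwa [Matrix.det_fin_two_of])
    exact ⟨σ, e, he, he', fun s r => by rw [h, Matrix.of_apply]⟩

theorem rep_tm : rep tm = !![0, 1, 0; 0, 0, 1; 1, 0, 0] := by decide +kernel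

theorem rep_im : rep im = !![1, 0, 0; 0, -1, 0; 0, 0, -1] := by decide +kernel

theorem rep_jm : rep jm = !![-1, 0, 0; 0, -1, 0; 0, 0, 1] := by decide +kernel

theorem three_eq_zero_S3 : (3 : S3) = 0 := CharP.cast_eq_zero S3 3

/-- The `1`-form with coefficients `f`. -/
noncomputable def oneForm (f : Fin 3 → S3) : Rf := ∑ s, f s ⊗ₜ[F3] yy s

/-- The coefficient of `y_s` in a form. -/
noncomputable def oneFormCoeff (s : Fin 3) : Rf →ₗ[F3] S3 :=
  (TensorProduct.rid F3 S3).toLinearMap ∘ₗ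
    LinearMap.lTensor S3 (LinearMap.proj s ∘ₗ ExteriorAlgebra.ιInv)

theorem oneFormCoeff_oneForm (f : Fin 3 → S3) (s : Fin 3) : oneFormCoeff s (oneForm f) = f s := by
  have h (v : Fin 3 → F3) : ExteriorAlgebra.ιInv (ExteriorAlgebra.ι F3 v) = v :=
    ExteriorAlgebra.ι_leftInverse v
  simp [oneForm, oneFormCoeff, yy, h, Pi.single_apply]

theorem oneForm_injective : Function.Injective oneForm := fun f f' h => by
  funext s
  rw [← oneFormCoeff_oneForm f, h, oneFormCoeff_oneForm]

theorem mem_oneForms_iff (z : Rf) : z ∈ oneForms ↔ ∃ f, z = oneForm f := by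
  constructor
  · rintro ⟨f₁, f₂, f₃, rfl⟩
    exact ⟨![f₁, f₂, f₃], by simp [oneForm, Fin.sum_univ_three]⟩
  · rintro ⟨f, rfl⟩
    exact ⟨f 0, f 1, f 2, by simp [oneForm, Fin.sum_univ_three]⟩

theorem repL_single (g : G3) (s : Fin 3) :
    repL g (Pi.single s 1) = ∑ r, rep g s r • Pi.single r (1 : F3) := by
  ext r
  simp [repL, Pi.single_apply]

theorem actR_oneForm (g : G3) (f : Fin 3 → S3) :
    actR g (oneForm f) = oneForm fun r => ∑ s, rep g s r • actS g (f s) := by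
  have h (s : Fin 3) : ExteriorAlgebra.map (repL g) (yy s) = ∑ r, rep g s r • yy r := by
    simp [yy, repL_single]
  simp only [oneForm, map_sum, actR, Algebra.TensorProduct.map_tmul, h, TensorProduct.tmul_sum,
    TensorProduct.sum_tmul, TensorProduct.tmul_smul, TensorProduct.smul_tmul']
  exact Finset.sum_comm

/-- The coefficient of `y_s` in the `i`-th generator, as a function of `x_s, x_{s+1}, x_{s+2}`. -/
noncomputable def genCoeff (i : Fin 6) (x y z : S3) : S3 :=
  ![x, y * z, x ^ 3, x * y ^ 2, y ^ 3 * z, x ^ 3 * y ^ 2] i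

/-- The coefficient of `y_s` in `Phi10 p`. -/
noncomputable def phiCoeff (p : Fin 6 → S3) (s : Fin 3) : S3 :=
  ∑ i, aeval av (p i) * genCoeff i (X s) (X (s + 1)) (X (s + 2))

theorem cvec_eq_oneForm (i : Fin 6) :
    cvec i = oneForm fun s => genCoeff i (X s) (X (s + 1)) (X (s + 2)) := by
  have h12 : (1 : Fin 3) + 2 = 0 := rfl
  have h21 : (2 : Fin 3) + 1 = 0 := rfl
  have h22 : (2 : Fin 3) + 2 = 1 := rfl
  have h11 : (1 : Fin 3) + 1 = 2 := rfl
  fin_cases i <;>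
  simp [cvec, c1, c2, c3, c4, c5, c6, oneForm, genCoeff, Fin.sum_univ_three, h12, h21, h22, h11]

theorem Phi10_eq_oneForm (p : Fin 6 → S3) : Phi10 p = oneForm (phiCoeff p) := by
  simp only [Phi10, cvec_eq_oneForm, oneForm, phiCoeff, Finset.mul_sum,
    Algebra.TensorProduct.tmul_mul_tmul, one_mul, TensorProduct.sum_tmul]
  exact Finset.sum_comm

theorem actS_X_of_signed_shift {g : G3} {σ : Fin 3} {e : Fin 3 → F3}
    (h : ∀ s r, rep g s r = if r = s + σ then e s else 0) (s : Fin 3) :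
    actS g (X s) = C (e s) * X (s + σ) := by
  simp [actS, h, MvPolynomial.smul_eq_C_mul]

theorem Fin3.sum_shift {M : Type*} [AddCommMonoid M] (f : Fin 3 → M) (σ : Fin 3) :
    f (0 + σ) + f (1 + σ) + f (2 + σ) = f 0 + f 1 + f 2 := by
  rw [← Fin.sum_univ_three, ← Fin.sum_univ_three fun s => f (s + σ)]
  exact Equiv.sum_comp (Equiv.addRight σ) f

theorem Fin3.prod_shift {M : Type*} [CommMonoid M] (f : Fin 3 → M) (σ : Fin 3) :
    f (0 + σ) * f (1 + σ) * f (2 + σ) = f 0 * f 1 * f 2 := by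
  rw [← Fin.prod_univ_three, ← Fin.prod_univ_three fun s => f (s + σ)]
  exact Equiv.prod_comp (Equiv.addRight σ) f

theorem actS_aeval_av (g : G3) (p : S3) : actS g (aeval av p) = aeval av p := by
  obtain ⟨σ, e, he, he', h⟩ := exists_rep_eq_signed_shift g
  have hX := actS_X_of_signed_shift h
  have hC (s : Fin 3) : (C (e s) : S3) ^ 2 = 1 := by rw [← C_pow, he, C_1]
  have hC4 (s : Fin 3) : (C (e s) : S3) ^ 4 = 1 := by rw [← C_pow, pow_mul _ 2 2, he]; simp
  have hC' : (C (e 0) * C (e 1) * C (e 2) : S3) = 1 := by rw [← C_mul, ← C_mul, he', C_1]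
  have hav (i : Fin 3) : actS g (av i) = av i := by
    fin_cases i
    · simp only [av, a1, Fin.zero_eta, cons_val_zero, map_add, map_pow, hX, mul_pow, hC, one_mul]
      exact Fin3.sum_shift (fun s => (X s : S3) ^ 2) σ
    · simp only [av, a2, Fin.mk_one, cons_val_one, cons_val_zero, map_mul, hX]
      rw [← Fin3.prod_shift (fun s => (X s : S3)) σ]
      linear_combination (X (0 + σ) * X (1 + σ) * X (2 + σ)) * hC'
    · simp only [av, a3, Fin.reduceFinMk, cons_val, map_add, map_pow, hX, mul_pow, hC4, one_mul]
      exact Fin3.sum_shift (fun s => (X s : S3) ^ 4) σ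
  rw [← AlgHom.comp_apply]
  congr 1
  ext i
  simp [hav]

theorem genCoeff_smul {a b c : S3} (ha : a ^ 2 = 1) (hb : b ^ 2 = 1) (h : a * b * c = 1)
    (i : Fin 6) (x y z : S3) :
    genCoeff i (a * x) (b * y) (c * z) = a * genCoeff i x y z := by
  fin_cases i <;> simp [genCoeff]
  · linear_combination (a * h - b * c * ha) * y * z
  · linear_combination a * x ^ 3 * ha
  · linear_combination a * x * y ^ 2 * hb
  · linear_combination y ^ 3 * z * (b * c * hb + a * h - b * c * ha)
  · linear_combination x ^ 3 * y ^ 2 * (a * b ^ 2 * ha + a * hb)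

theorem actS_phiCoeff {g : G3} {σ : Fin 3} {e : Fin 3 → F3} (he : ∀ s, e s ^ 2 = 1)
    (he' : e 0 * e 1 * e 2 = 1) (h : ∀ s r, rep g s r = if r = s + σ then e s else 0)
    (p : Fin 6 → S3) (s : Fin 3) :
    actS g (phiCoeff p s) = C (e s) * phiCoeff p (s + σ) := by
  have hX := actS_X_of_signed_shift h
  have hC (s : Fin 3) : (C (e s) : S3) ^ 2 = 1 := by rw [← C_pow, he, C_1]
  have hes : e s * e (s + 1) * e (s + 2) = 1 := by
    rw [← he', ← Fin3.prod_shift e s, zero_add, add_comm s, add_comm s]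
  have hC' : (C (e s) * C (e (s + 1)) * C (e (s + 2)) : S3) = 1 := by
    rw [← C_mul, ← C_mul, hes, C_1]
  have hmap (i : Fin 6) (x y z : S3) :
      actS g (genCoeff i x y z) = genCoeff i (actS g x) (actS g y) (actS g z) := by
    fin_cases i <;> simp [genCoeff]
  simp only [phiCoeff, map_sum, map_mul, actS_aeval_av, hmap, hX,
    genCoeff_smul (hC s) (hC (s + 1)) hC', Finset.mul_sum, add_right_comm s σ]
  exact Finset.sum_congr rfl fun i _ => by ring

theorem actR_Phi10 (g : G3) (p : Fin 6 → S3) : actR g (Phi10 p) = Phi10 p := by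
  obtain ⟨σ, e, he, he', h⟩ := exists_rep_eq_signed_shift g
  rw [Phi10_eq_oneForm, actR_oneForm]
  congr 1
  funext r
  rw [Finset.sum_eq_single (r - σ)]
  · rw [actS_phiCoeff he he' h, h, sub_add_cancel, if_pos rfl, MvPolynomial.smul_eq_C_mul,
      ← mul_assoc, ← C_mul, ← sq, he, C_1, one_mul]
  · intro s _ hs
    rw [h, if_neg, zero_smul]
    rintro rfl
    simp at hs
  · simp

/-- The `A`-span of the `y₀`-coefficients of the six generators. -/
def InSpan (f : S3) : Prop := ∃ p, f = phiCoeff p 0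

theorem InSpan.zero : InSpan 0 := ⟨0, by simp [phiCoeff]⟩

theorem InSpan.add {f f' : S3} : InSpan f → InSpan f' → InSpan (f + f') := by
  rintro ⟨p, rfl⟩ ⟨q, rfl⟩
  exact ⟨p + q, by simp [phiCoeff, add_mul, Finset.sum_add_distrib]⟩

theorem InSpan.aeval_mul {f : S3} (q : S3) : InSpan f → InSpan (aeval av q * f) := by
  rintro ⟨p, rfl⟩
  exact ⟨fun i => q * p i, by simp [phiCoeff, Finset.mul_sum, mul_assoc]⟩

theorem InSpan.C_mul {f : S3} (k : F3) (hf : InSpan f) : InSpan (C k * f) := by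
  simpa [MvPolynomial.algebraMap_eq] using hf.aeval_mul (C k)

theorem InSpan.sum {ι : Type*} (s : Finset ι) {f : ι → S3} (hf : ∀ i ∈ s, InSpan (f i)) :
    InSpan (∑ i ∈ s, f i) :=
  Finset.sum_induction f InSpan (fun _ _ => InSpan.add) InSpan.zero hf

theorem InSpan.mul_of_gen {u : S3} (hu : ∀ i, InSpan (u * genCoeff i (X 0) (X 1) (X 2)))
    {f : S3} : InSpan f → InSpan (u * f) := by
  rintro ⟨p, rfl⟩
  rw [phiCoeff, Finset.mul_sum]
  refine InSpan.sum _ fun i _ => ?_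
  rw [mul_left_comm]
  exact (hu i).aeval_mul _

/-- The second elementary symmetric polynomial in the squares of the variables. -/
theorem esymm_two_sq :
    (X 0 ^ 2 * X 1 ^ 2 + X 0 ^ 2 * X 2 ^ 2 + X 1 ^ 2 * X 2 ^ 2 : S3) = a3 - a1 ^ 2 := by
  rw [a1, a3]
  linear_combination (X 0 ^ 2 * X 1 ^ 2 + X 0 ^ 2 * X 2 ^ 2 + X 1 ^ 2 * X 2 ^ 2) * three_eq_zero_S3

theorem phiCoeff_zero (p : Fin 6 → S3) :
    phiCoeff p 0 = aeval av (p 0) * X 0 + aeval av (p 1) * (X 1 * X 2) + aeval av (p 2) * X 0 ^ 3 +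
      aeval av (p 3) * (X 0 * X 1 ^ 2) + aeval av (p 4) * (X 1 ^ 3 * X 2) +
      aeval av (p 5) * (X 0 ^ 3 * X 1 ^ 2) := by
  simp [phiCoeff, genCoeff, Fin.sum_univ_six]

theorem InSpan.X0_sq_mul {f : S3} : InSpan f → InSpan (X 0 ^ 2 * f) := by
  refine InSpan.mul_of_gen fun i => ?_
  have h2 := esymm_two_sq
  have h1 : a1 = (X 0 ^ 2 + X 1 ^ 2 + X 2 ^ 2 : S3) := rfl
  have hp : a2 = (X 0 * X 1 * X 2 : S3) := rfl
  fin_cases i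
  · refine ⟨![0, 0, 1, 0, 0, 0], ?_⟩
    simp [phiCoeff_zero, genCoeff, av]
    ring
  · refine ⟨![X 1, 0, 0, 0, 0, 0], ?_⟩
    simp [phiCoeff_zero, genCoeff, av, hp]
    ring
  · refine ⟨![-(X 2 - X 0 ^ 2), X 1, X 0, 0, 0, 0], ?_⟩
    simp [phiCoeff_zero, genCoeff, av, hp]
    linear_combination -X 0 * h2 - X 0 ^ 3 * h1
  · refine ⟨![0, 0, 0, 0, 0, 1], ?_⟩
    simp [phiCoeff_zero, genCoeff, av]
    ring
  · refine ⟨![0, 0, 0, X 1, 0, 0], ?_⟩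
    simp [phiCoeff_zero, genCoeff, av, hp]
    ring
  · refine ⟨![0, 0, 0, -(X 2 - X 0 ^ 2), X 1, X 0], ?_⟩
    simp [phiCoeff_zero, genCoeff, av, hp]
    linear_combination -(X 0 * X 1 ^ 2) * h2 - X 0 ^ 3 * X 1 ^ 2 * h1

theorem InSpan.X1_sq_mul {f : S3} : InSpan f → InSpan (X 1 ^ 2 * f) := by
  refine InSpan.mul_of_gen fun i => ?_
  have h2 := esymm_two_sq
  have h1 : a1 = (X 0 ^ 2 + X 1 ^ 2 + X 2 ^ 2 : S3) := rfl
  have hp : a2 = (X 0 * X 1 * X 2 : S3) := rfl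
  fin_cases i
  · refine ⟨![0, 0, 0, 1, 0, 0], ?_⟩
    simp [phiCoeff_zero, genCoeff, av]
    ring
  · refine ⟨![0, 0, 0, 0, 1, 0], ?_⟩
    simp [phiCoeff_zero, genCoeff, av]
    ring
  · refine ⟨![0, 0, 0, 0, 0, 1], ?_⟩
    simp [phiCoeff_zero, genCoeff, av]
    ring
  · refine ⟨![0, -X 1, 0, X 0, 0, -1], ?_⟩
    simp [phiCoeff_zero, genCoeff, av, hp]
    linear_combination -X 0 * X 1 ^ 2 * h1
  · refine ⟨![X 1 * X 0, -(X 2 - X 0 ^ 2), -X 1, -X 1, X 0, 0], ?_⟩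
    simp [phiCoeff_zero, genCoeff, av, hp]
    linear_combination -X 1 * X 2 * h2 - (X 1 ^ 3 * X 2 + X 0 ^ 2 * X 1 * X 2) * h1
  · refine ⟨![-X 1 ^ 2, 0, 0, X 2 - X 0 ^ 2, -X 1, 0], ?_⟩
    simp [phiCoeff_zero, genCoeff, av, hp]
    linear_combination X 0 * X 1 ^ 2 * h2

theorem InSpan.X2_sq_mul {f : S3} (hf : InSpan f) : InSpan (X 2 ^ 2 * f) := by
  have h : X 2 ^ 2 * f = aeval av (X 0 : S3) * f + (C (-1) * (X 0 ^ 2 * f) + C (-1) * (X 1 ^ 2 * f)) := by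
    simp [av, a1]
    ring
  rw [h]
  exact (hf.aeval_mul _).add ((hf.X0_sq_mul.C_mul _).add (hf.X1_sq_mul.C_mul _))

theorem InSpan.sq_monomial_mul {f : S3} (hf : InSpan f) (a b c : ℕ) :
    InSpan ((X 0 ^ 2) ^ a * ((X 1 ^ 2) ^ b * ((X 2 ^ 2) ^ c * f))) := by
  have key {u : S3} (hu : ∀ {f}, InSpan f → InSpan (u * f)) (n : ℕ) {f : S3} (hf : InSpan f) :
      InSpan (u ^ n * f) := by
    induction n with
    | zero => simpa using hf
    | succ n ih => simpa [pow_succ', mul_assoc] using hu ih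
  exact key X0_sq_mul a (key X1_sq_mul b (key X2_sq_mul c hf))

theorem actS_im_X : actS im (X 0) = X 0 ∧ actS im (X 1) = -X 1 ∧ actS im (X 2) = -X 2 := by
  simp [actS, rep_im, Fin.sum_univ_three]

theorem actS_jm_X : actS jm (X 0) = -X 0 ∧ actS jm (X 1) = -X 1 ∧ actS jm (X 2) = X 2 := by
  simp [actS, rep_jm, Fin.sum_univ_three]

theorem inSpan_X0 : InSpan (X 0) := ⟨![1, 0, 0, 0, 0, 0], by simp [phiCoeff_zero]⟩

theorem inSpan_X1_mul_X2 : InSpan (X 1 * X 2) := ⟨![0, 1, 0, 0, 0, 0], by simp [phiCoeff_zero]⟩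

/-- The projection of `S` onto the relative invariants takes values in the span. -/
theorem inSpan_projection (f : S3) :
    InSpan (f + actS im f - actS jm f - actS im (actS jm f)) := by
  obtain ⟨i0, i1, i2⟩ := actS_im_X
  obtain ⟨j0, j1, j2⟩ := actS_jm_X
  induction f using MvPolynomial.induction_on' with
  | add p q hp hq =>
    convert hp.add hq using 1
    simp only [map_add]
    ring
  | monomial m k =>
    have hC (g : G3) : actS g (C k) = C k := (actS g).commutes k
    have hm : monomial m k = C k * (X 0 ^ m 0 * X 1 ^ m 1 * X 2 ^ m 2 : S3) := by
      rw [monomial_eq, Finsupp.prod_fintype _ _ (by simp), Fin.prod_univ_three]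
    rw [hm]
    generalize m 0 = a, m 1 = b, m 2 = c
    simp only [map_mul, map_pow, hC, i0, i1, i2, j0, j1, j2, map_neg]
    obtain ⟨a, rfl | rfl⟩ := Nat.even_or_odd' a <;> obtain ⟨b, rfl | rfl⟩ := Nat.even_or_odd' b <;>
      obtain ⟨c, rfl | rfl⟩ := Nat.even_or_odd' c <;>
      simp only [pow_succ, pow_mul, mul_neg, neg_mul, neg_neg, pow_zero, one_mul]
    case inr.inl.inl =>
      convert (inSpan_X0.sq_monomial_mul a b c).C_mul k using 1
      linear_combination (C k * ((X 0 ^ 2) ^ a * X 0 * (X 1 ^ 2) ^ b * (X 2 ^ 2) ^ c)) *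
        three_eq_zero_S3
    case inl.inr.inr =>
      convert (inSpan_X1_mul_X2.sq_monomial_mul a b c).C_mul k using 1
      linear_combination (C k * ((X 0 ^ 2) ^ a * (X 1 ^ 2) ^ b * X 1 * ((X 2 ^ 2) ^ c * X 2))) *
        three_eq_zero_S3
    all_goals
      convert InSpan.zero using 1
      ring

theorem rename_aeval_av (e : Equiv.Perm (Fin 3)) (p : S3) :
    rename e (aeval av p) = aeval av p := by
  have hav (i : Fin 3) : rename e (av i) = av i := by
    fin_cases i
    · simpa [av, a1, Fin.sum_univ_three] using Equiv.sum_comp e fun s => (X s : S3) ^ 2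
    · simpa [av, a2, Fin.prod_univ_three] using Equiv.prod_comp e fun s => (X s : S3)
    · simpa [av, a3, Fin.sum_univ_three] using Equiv.sum_comp e fun s => (X s : S3) ^ 4
  rw [← AlgHom.comp_apply]
  congr 1
  ext i
  simp [hav]

theorem X_sq_sub_X_sq_ne_zero {i j : Fin 3} (h : i ≠ j) : (X i ^ 2 - X j ^ 2 : S3) ≠ 0 := by
  intro h0
  simpa [h.symm] using congrArg (eval (Pi.single i 1)) h0

theorem eq_zero_of_aeval_av_combination {p q r : S3}
    (h : aeval av p * X 0 + aeval av q * (X 1 * X 2) + aeval av r * X 0 ^ 3 = 0) :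
    aeval av p = 0 ∧ aeval av q = 0 ∧ aeval av r = 0 := by
  have h' (e : Equiv.Perm (Fin 3)) := congrArg (rename e) h
  simp only [map_add, map_mul, map_pow, map_zero, rename_aeval_av, rename_X] at h'
  have k1 := h' (finRotate 3)
  have k2 := h' (finRotate 3)⁻¹
  have e0 : (finRotate 3) 0 = 1 := by decide
  have e1 : (finRotate 3) 1 = 2 := by decide
  have e2 : (finRotate 3) 2 = 0 := by decide
  have f0 : (finRotate 3)⁻¹ 0 = 2 := by decide
  have f1 : (finRotate 3)⁻¹ 1 = 0 := by decide
  have f2 : (finRotate 3)⁻¹ 2 = 1 := by decide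
  simp only [e0, e1, e2, f0, f1, f2] at k1 k2
  have l1 : aeval av p + aeval av r * (X 0 ^ 2 + X 1 ^ 2) = 0 := by
    refine (mul_eq_zero.1 ?_).resolve_left (X_sq_sub_X_sq_ne_zero (show (0 : Fin 3) ≠ 1 by decide))
    linear_combination X 0 * h - X 1 * k1
  have l2 : aeval av p + aeval av r * (X 0 ^ 2 + X 2 ^ 2) = 0 := by
    refine (mul_eq_zero.1 ?_).resolve_left (X_sq_sub_X_sq_ne_zero (show (0 : Fin 3) ≠ 2 by decide))
    linear_combination X 0 * h - X 2 * k2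
  have hr : aeval av r = 0 := by
    refine (mul_eq_zero.1 ?_).resolve_left (X_sq_sub_X_sq_ne_zero (show (1 : Fin 3) ≠ 2 by decide))
    linear_combination l1 - l2
  have hp : aeval av p = 0 := by rwa [hr, zero_mul, add_zero] at l1
  refine ⟨hp, ?_, hr⟩
  rw [hp, hr, zero_mul, zero_mul, zero_add, add_zero] at h
  exact (mul_eq_zero.1 h).resolve_right (mul_ne_zero (X_ne_zero 1) (X_ne_zero 2))

theorem aeval_av_eq_zero_of_phiCoeff_eq_zero {p : Fin 6 → S3} (h : phiCoeff p 0 = 0) (i : Fin 6) :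
    aeval av (p i) = 0 := by
  rw [phiCoeff_zero] at h
  have k := congrArg (rename (Equiv.swap (1 : Fin 3) 2)) h
  have e0 : Equiv.swap (1 : Fin 3) 2 0 = 0 := by decide
  simp only [map_add, map_mul, map_pow, map_zero, rename_aeval_av, rename_X, e0,
    Equiv.swap_apply_left, Equiv.swap_apply_right] at k
  have l1 : aeval av (p 3) * X 0 + aeval av (p 4) * (X 1 * X 2) + aeval av (p 5) * X 0 ^ 3 = 0 := by
    refine (mul_eq_zero.1 ?_).resolve_left (X_sq_sub_X_sq_ne_zero (show (1 : Fin 3) ≠ 2 by decide))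
    linear_combination h - k
  have l0 : aeval av (p 0) * X 0 + aeval av (p 1) * (X 1 * X 2) + aeval av (p 2) * X 0 ^ 3 = 0 := by
    linear_combination h - X 1 ^ 2 * l1
  obtain ⟨h0, h1, h2⟩ := eq_zero_of_aeval_av_combination l0
  obtain ⟨h3, h4, h5⟩ := eq_zero_of_aeval_av_combination l1
  fin_cases i <;> assumption

theorem algebraicIndependent_av : AlgebraicIndependent F3 av := by
  have hmem (i : Fin 3) : av i ∈ Algebra.adjoin F3 (Set.range av) :=
    Algebra.subset_adjoin ⟨i, rfl⟩
  let b (i : Fin 3) : Algebra.adjoin F3 (Set.range av) := ⟨av i, hmem i⟩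
  have hX (s : Fin 3) : IsIntegral (Algebra.adjoin F3 (Set.range av)) (X s : S3) := by
    refine .of_pow (n := 2) two_pos ⟨Polynomial.X ^ 3 + (-Polynomial.C (b 0) * Polynomial.X ^ 2 +
      Polynomial.C (b 2 - b 0 ^ 2) * Polynomial.X - Polynomial.C (b 1 ^ 2)), ?_, ?_⟩
    · monicity!
    · have h2 := esymm_two_sq
      simp [Polynomial.eval₂_add, b, Subalgebra.algebraMap_eq]
      change (X s ^ 2) ^ 3 + (-(a1 * (X s ^ 2) ^ 2) + (a3 - a1 ^ 2) * X s ^ 2 - a2 ^ 2) = 0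
      rw [← h2, a1, a2]
      fin_cases s <;> simp only [Fin.zero_eta, Fin.mk_one, Fin.reduceFinMk] <;> ring
  have : Algebra.IsIntegral (Algebra.adjoin F3 (Set.range av)) S3 := ⟨fun f => by
    induction f using MvPolynomial.induction_on with
    | C k => exact isIntegral_algebraMap (x := algebraMap F3 (Algebra.adjoin F3 (Set.range av)) k)
    | add p q hp hq => exact hp.add hq
    | mul_X p s hp => exact hp.mul (hX s)⟩
  have : Algebra.IsAlgebraic (Algebra.adjoin F3 (Set.range av)) S3 := inferInstance
  exact (Algebra.IsAlgebraic.isTranscendenceBasis_of_le_trdeg_of_finite F3 av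
    (by simp [MvPolynomial.trdeg_of_isDomain])).1

theorem Phi10_injective : Function.Injective Phi10 := by
  intro p q h
  rw [Phi10_eq_oneForm, Phi10_eq_oneForm] at h
  have h0 : phiCoeff (p - q) 0 = 0 := by
    have := congrFun (oneForm_injective h) 0
    rw [phiCoeff_zero, phiCoeff_zero] at this
    rw [phiCoeff_zero]
    simp only [Pi.sub_apply, map_sub]
    linear_combination this
  funext i
  have hi := aeval_av_eq_zero_of_phiCoeff_eq_zero h0 i
  exact sub_eq_zero.1 (algebraicIndependent_av (by simpa using hi))

/-- A `G`-invariant `1`-form is determined by its first coefficient, a relative invariant. -/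
theorem coeff_eq_of_invariant {f : Fin 3 → S3} (h : ∀ g, actR g (oneForm f) = oneForm f) :
    actS im (f 0) = f 0 ∧ actS jm (f 0) = -f 0 ∧ f 1 = actS tm (f 0) ∧ f 2 = actS tm (f 1) := by
  have key (g : G3) (r : Fin 3) : ∑ s, rep g s r • actS g (f s) = f r := by
    have := h g
    rw [actR_oneForm] at this
    exact congrFun (oneForm_injective this) r
  have hi := key im 0
  have hj := key jm 0
  have ht1 := key tm 1
  have ht2 := key tm 2
  simp [rep_im, rep_jm, rep_tm, Fin.sum_univ_three] at hi hj ht1 ht2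
  exact ⟨hi, by rw [← hj, neg_neg, hj], ht1.symm, ht2.symm⟩

/-- The `G`-invariant `1`-forms form a free `A`-module with basis `{c₁, …, c₆}`: the map
`(p₁,…,p₆) ↦ ∑ᵢ pᵢ(a₁,a₂,a₃)·cᵢ` is injective, with image exactly the set of `G`-fixed
elements of `R` of the form `f₁y₁ + f₂y₂ + f₃y₃`. -/
theorem stmt10 :
    Function.Injective Phi10 ∧
    Set.range Phi10 = oneForms ∩ {z : Rf | ∀ g : G3, actR g z = z} := by
  refine ⟨Phi10_injective, Set.Subset.antisymm ?_ ?_⟩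
  · rintro _ ⟨p, rfl⟩
    exact ⟨(mem_oneForms_iff _).2 ⟨_, Phi10_eq_oneForm p⟩, fun g => actR_Phi10 g p⟩
  · rintro z ⟨hz, hinv⟩
    obtain ⟨f, rfl⟩ := (mem_oneForms_iff z).1 hz
    obtain ⟨hi, hj, h1, h2⟩ := coeff_eq_of_invariant hinv
    obtain ⟨p, hp⟩ := inSpan_projection (f 0)
    have h0 : f 0 = phiCoeff p 0 := by
      rw [← hp, hj, map_neg, hi]
      linear_combination -f 0 * three_eq_zero_S3
    obtain ⟨-, -, k1, k2⟩ := coeff_eq_of_invariant (f := phiCoeff p) fun g => by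
      rw [← Phi10_eq_oneForm, actR_Phi10]
    refine ⟨p, ?_⟩
    rw [Phi10_eq_oneForm]
    congr 1
    funext s
    fin_cases s
    · exact h0.symm
    · exact k1.trans ((congrArg _ h0.symm).trans h1.symm)
    · change phiCoeff p 2 = f 2
      rw [k2, k1, h2, h1, h0]
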